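/- For every integer r ≥ 2, the family 𝓕(rK_2) of all finite simple graphs containing no induced copy of rK_2, the disjoint union of r edges, is feasible. -/

import Mathlib

open SimpleGraph

/-- `(n, m)` is a feasible pair for a family `F` of finite simple graphs
(given, for each number of vertices `n`, as a predicate on simple graphs on `Fin n`):
some member of the family has exactly `n` vertices and exactly `m` edges. -/
def FeasiblePair (F : ∀ n : ℕ, SimpleGraph (Fin n) → Prop) (n m : ℕ) : Prop :=
  ∃ G : SimpleGraph (Fin n), F n G ∧ G.edgeSet.ncard = m

/-- A family of finite simple graphs is feasible if every pair `(n, m)` with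
`n ≥ 1` and `0 ≤ m ≤ n(n-1)/2` is feasible for it. -/
def Feasible (F : ∀ n : ℕ, SimpleGraph (Fin n) → Prop) : Prop :=
  ∀ n m : ℕ, 1 ≤ n → m ≤ n * (n - 1) / 2 → FeasiblePair F n m

/-- `G` is contained in `H` as an induced subgraph: there is an injective map of the
vertices of `G` into the vertices of `H` under which adjacency in `H` holds
if and only if it holds in `G`. -/
def IndContains {α β : Type*} (G : SimpleGraph α) (H : SimpleGraph β) : Prop :=
  ∃ f : α ↪ β, ∀ a b : α, H.Adj (f a) (f b) ↔ G.Adj a b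

/-- The family `𝓕(G)` of all induced `G`-free finite simple graphs. -/
def IndFreeFamily {α : Type*} (G : SimpleGraph α) :
    ∀ n : ℕ, SimpleGraph (Fin n) → Prop :=
  fun _ H => ¬ IndContains G H

/-- The matching `rK_2`: the disjoint union of `r` edges, on `2r` vertices. -/
def matchingGraph (r : ℕ) : SimpleGraph (Fin r × Fin 2) :=
  SimpleGraph.fromRel (fun a b => a.1 = b.1)


/-- Colexicographic rank of a pair of naturals. -/
def colexCode (a b : ℕ) : ℕ := (max a b).choose 2 + min a b

theorem colexCode_comm (a b : ℕ) : colexCode a b = colexCode b a := by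
  unfold colexCode; rw [max_comm, min_comm]

theorem choose_two_succ (j : ℕ) : (j + 1).choose 2 = j + j.choose 2 := by
  rw [Nat.choose_succ_succ j 1, Nat.choose_one_right]

theorem colexCode_of_lt {a b : ℕ} (h : a < b) : colexCode a b = b.choose 2 + a := by
  unfold colexCode; rw [max_eq_right h.le, min_eq_left h.le]

theorem colexCode_lt {a b d : ℕ} (hne : a ≠ b) (ha : a < d) (hb : b < d) :
    colexCode a b < d.choose 2 := by
  wlog h : a < b generalizing a b
  · rw [colexCode_comm]; exact this hne.symm hb ha (by omega)
  rw [colexCode_of_lt h]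
  have h1 := choose_two_succ b
  have h2 : (b + 1).choose 2 ≤ d.choose 2 := Nat.choose_le_choose 2 hb
  omega

theorem colexCode_surj (k : ℕ) : ∃ i j : ℕ, i < j ∧ j.choose 2 + i = k := by
  induction k with
  | zero => exact ⟨0, 1, by decide, by decide⟩
  | succ k ih =>
    obtain ⟨i, j, hij, h⟩ := ih
    by_cases hi : i + 1 < j
    · exact ⟨i + 1, j, hi, by omega⟩
    · refine ⟨0, j + 1, by omega, ?_⟩
      rw [choose_two_succ]; omega

theorem colexCode_inj {a b c d : ℕ} (h1 : a < b) (h2 : c < d)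
    (h : colexCode a b = colexCode c d) : a = c ∧ b = d := by
  have e1 := colexCode_of_lt h1
  have e2 := colexCode_of_lt h2
  rcases lt_trichotomy b d with hbd | hbd | hbd
  · have := colexCode_lt h1.ne (h1.trans hbd) hbd
    omega
  · subst hbd; omega
  · have := colexCode_lt h2.ne (h2.trans hbd) hbd
    omega

/-- The graph whose edges are the first `m` pairs in colexicographic order. -/
def colexGraph (n m : ℕ) : SimpleGraph (Fin n) where
  Adj a b := a ≠ b ∧ colexCode a b < m
  symm := ⟨fun a b h => ⟨h.1.symm, by rw [colexCode_comm]; exact h.2⟩⟩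
  loopless := ⟨fun _ h => h.1 rfl⟩

/-- The colexicographic rank on unordered pairs. -/
def symCode (n : ℕ) : Sym2 (Fin n) → ℕ :=
  Sym2.lift ⟨fun a b => colexCode a b, fun a b => colexCode_comm a b⟩

theorem colexGraph_exists_lt {n m : ℕ} {e : Sym2 (Fin n)} (he : e ∈ (colexGraph n m).edgeSet) :
    ∃ a b : Fin n, a < b ∧ colexCode a b < m ∧ e = s(a, b) := by
  induction e with
  | _ a b =>
    obtain ⟨hne, hlt⟩ : a ≠ b ∧ colexCode a b < m := he
    rcases lt_or_gt_of_ne hne with h | h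
    · exact ⟨a, b, h, hlt, rfl⟩
    · exact ⟨b, a, h, by rw [colexCode_comm]; exact hlt, Sym2.eq_swap⟩

theorem colexGraph_ncard (n m : ℕ) (hm : m ≤ n.choose 2) :
    (colexGraph n m).edgeSet.ncard = m := by
  have hinj : Set.InjOn (symCode n) (colexGraph n m).edgeSet := by
    intro e he f hf h
    obtain ⟨a, b, hab, -, rfl⟩ := colexGraph_exists_lt he
    obtain ⟨c, d, hcd, -, rfl⟩ := colexGraph_exists_lt hf
    obtain ⟨h1, h2⟩ := colexCode_inj (show (a : ℕ) < b from hab) (show (c : ℕ) < d from hcd) h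
    rw [Fin.ext h1, Fin.ext h2]
  have himg : Set.image (symCode n) (colexGraph n m).edgeSet = Set.Iio m := by
    ext k
    constructor
    · rintro ⟨e, he, rfl⟩
      obtain ⟨a, b, hab, hlt, rfl⟩ := colexGraph_exists_lt he
      exact hlt
    · intro hk
      have hk : k < m := hk
      obtain ⟨i, j, hij, h⟩ := colexCode_surj k
      have hj : j < n := by
        by_contra hj
        have := Nat.choose_le_choose 2 (not_lt.mp hj)
        omega
      have hc : colexCode i j = k := by rw [colexCode_of_lt hij, h]
      refine ⟨s(⟨i, hij.trans hj⟩, ⟨j, hj⟩), ⟨?_, ?_⟩, hc⟩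
      · intro h; exact hij.ne (congrArg Fin.val h)
      · exact hc.trans_lt hk
  rw [← hinj.ncard_image, himg, ← Finset.coe_Iio, Set.ncard_coe_finset, Nat.card_Iio]

/-- Of two disjoint edges, there is a joining edge. -/
theorem colexGraph_join {n m : ℕ} {a b c d : Fin n} (h1 : (colexGraph n m).Adj a b)
    (h2 : (colexGraph n m).Adj c d) (hac : a ≠ c) (had : a ≠ d) (hbc : b ≠ c) (hbd : b ≠ d) :
    (colexGraph n m).Adj a c ∨ (colexGraph n m).Adj a d ∨
      (colexGraph n m).Adj b c ∨ (colexGraph n m).Adj b d := by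
  wlog hab : a < b generalizing a b
  · have := this h1.symm hbc hbd hac had (lt_of_le_of_ne (not_lt.mp hab) h1.1.symm)
    tauto
  wlog hcd : c < d generalizing c d
  · have := this h2.symm had hac hbd hbc (lt_of_le_of_ne (not_lt.mp hcd) h2.1.symm)
    tauto
  rcases lt_or_gt_of_ne hbd with h | h
  · refine Or.inr (Or.inr (Or.inl ⟨hbc, ?_⟩))
    have e := colexCode_of_lt (show (c : ℕ) < d from hcd)
    have l := colexCode_lt (d := d) (fun h => hbc (Fin.ext h)) h hcd
    have := h2.2
    omega
  · refine Or.inr (Or.inl ⟨had, ?_⟩)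
    have e := colexCode_of_lt (show (a : ℕ) < b from hab)
    have l := colexCode_lt (d := b) (fun h => had (Fin.ext h)) hab h
    have := h1.2
    omega

/-- For every `r ≥ 2`, the family of all induced `rK_2`-free graphs is feasible. -/
theorem feasible_indFreeFamily_matching (r : ℕ) (hr : 2 ≤ r) :
    Feasible (IndFreeFamily (matchingGraph r)) := by
  intro n m _ hm
  refine ⟨colexGraph n m, ?_, colexGraph_ncard n m (by rwa [Nat.choose_two_right])⟩
  rintro ⟨f, hf⟩
  let x : Fin r := ⟨0, by omega⟩
  let y : Fin r := ⟨1, by omega⟩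
  have hxy : x ≠ y := by simp [x, y]
  have hadj : ∀ z : Fin r, (colexGraph n m).Adj (f (z, 0)) (f (z, 1)) := by
    intro z
    rw [hf]
    simp [matchingGraph]
  have hne : ∀ i j : Fin 2, f (x, i) ≠ f (y, j) := by
    intro i j h
    exact hxy (congrArg Prod.fst (f.injective h))
  have hnadj : ∀ i j : Fin 2, ¬ (colexGraph n m).Adj (f (x, i)) (f (y, j)) := by
    intro i j
    rw [hf]
    simp [matchingGraph, hxy, hxy.symm]
  have := colexGraph_join (hadj x) (hadj y) (hne _ _) (hne _ _) (hne _ _) (hne _ _)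
  simp [hnadj] at this
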